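/- arXiv:0803.0917 — 2 statements merged into one kernel-verified Lean document; each statement's English description precedes it below -/
import Mathlib

section
/- There are exactly six pentads in U: the collection of all subsets S ⊆ U with 0 ∉ S, |S| = 5, and ⟨u,v⟩ = 1 for all distinct u, v ∈ S, has cardinality 6. -/
/-!
Pentads are the 5-cliques of the graph on `U` in which `u` and `v` are adjacent when `⟨u, v⟩ = 1`.
Cliques in this graph can be counted one vertex at a time, over any symplectic `𝔽₂`-space of finite
dimension `d`. A linearly independent `k`-clique has `2 ^ (d - k)` common neighbours, because these
are the solutions of `k` independent affine equations. Conversely, pairing a linear relation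
`∑ c s • s = 0` on a clique with one of its members `t` gives `c t = ∑ c s`, and pairing it with a
common neighbour gives `∑ c s = 0`; so a clique with a common neighbour is independent. The first
identity also shows that the coefficients of a relation are all equal, so a nonempty clique is
dependent exactly when its sum is `0`. When `k` is even, the sum of a `k`-clique is one of its
common neighbours, and the only one whose adjunction destroys independence. For `d = 4` one obtains
in turn `1`, `15`, `60`, `60` and `30` independent cliques of sizes `0` to `4`, and `30 / 5 = 6`
cliques of size `5`.
-/

/-- The symplectic vector space `U = 𝔽₂⁴`. -/
abbrev Uspace : Type := Fin 4 → ZMod 2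

/-- The symplectic form on `U` with `⟨eᵢ,eⱼ⟩ = ⟨fᵢ,fⱼ⟩ = 0` and `⟨eᵢ,fⱼ⟩ = δᵢⱼ`,
where `e₁,e₂,f₁,f₂` are the standard basis vectors (coordinates `0,1,2,3`). -/
def symForm (x y : Uspace) : ZMod 2 :=
  x 0 * y 2 + x 1 * y 3 + x 2 * y 0 + x 3 * y 1

/-- A pentad is a set of 5 nonzero vectors of `U` pairing to `1` under the
symplectic form. -/
def IsPentad (S : Finset Uspace) : Prop :=
  (0 : Uspace) ∉ S ∧ S.card = 5 ∧ ∀ u ∈ S, ∀ v ∈ S, u ≠ v → symForm u v = 1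

section

open Finset Module

theorem card_mul_succ_eq_card_mul_of_insert {α : Type*} [Fintype α] [DecidableEq α]
    {𝒜 ℬ : Finset (Finset α)} {k e : ℕ} (hcard : ∀ T ∈ ℬ, #T = k + 1)
    (herase : ∀ T ∈ ℬ, ∀ x ∈ T, T.erase x ∈ 𝒜)
    (hinsert : ∀ S ∈ 𝒜, #{x | x ∉ S ∧ insert x S ∈ ℬ} = e) :
    #ℬ * (k + 1) = #𝒜 * e := by
  symm
  refine card_mul_eq_card_mul (fun S T ↦ ∃ x ∉ S, insert x S = T) (fun S hS ↦ ?_) fun T hT ↦ ?_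
  · have habove : ℬ.bipartiteAbove (fun S T ↦ ∃ x ∉ S, insert x S = T) S =
        ({x | x ∉ S ∧ insert x S ∈ ℬ} : Finset α).image (insert · S) := by
      ext T
      simp only [mem_bipartiteAbove, mem_image, mem_filter_univ]
      constructor
      · rintro ⟨hT, x, hx, rfl⟩
        exact ⟨x, ⟨hx, hT⟩, rfl⟩
      · rintro ⟨x, ⟨hx, hT⟩, rfl⟩
        exact ⟨hT, x, hx, rfl⟩
    rw [habove, card_image_of_injOn, hinsert S hS]
    exact (insert_inj_on' S).mono fun x hx ↦ mem_compl.2 ((mem_filter_univ x).1 hx).1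
  · have hbelow : 𝒜.bipartiteBelow (fun S T ↦ ∃ x ∉ S, insert x S = T) T = T.image T.erase := by
      ext S
      simp only [mem_bipartiteBelow, mem_image]
      constructor
      · rintro ⟨-, x, hx, rfl⟩
        exact ⟨x, mem_insert_self x S, erase_insert hx⟩
      · rintro ⟨x, hx, rfl⟩
        exact ⟨herase T hT x hx, x, notMem_erase x T, insert_erase hx⟩
    rw [hbelow, card_image_of_injOn (erase_injOn T), hcard T hT]

theorem mem_orthogonal_span_iff {K V : Type*} [CommRing K] [AddCommGroup V] [Module K V]
    {B : LinearMap.BilinForm K V} {S : Set V} {x : V} :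
    x ∈ B.orthogonal (Submodule.span K S) ↔ ∀ s ∈ S, B s x = 0 := by
  rw [LinearMap.BilinForm.mem_orthogonal_iff]
  constructor
  · exact fun hx s hs ↦ hx s (Submodule.subset_span hs)
  · exact fun hx ↦ Submodule.span_le (p := LinearMap.ker (LinearMap.flip B x)).2 hx

theorem exists_forall_apply_eq_one {K V : Type*} [Field K] [AddCommGroup V] [Module K V]
    [FiniteDimensional K V] {B : LinearMap.BilinForm K V} (hB : B.Nondegenerate) {S : Set V}
    (hS : LinearIndepOn K id S) : ∃ x, ∀ s ∈ S, B s x = 1 := by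
  obtain ⟨f, hf⟩ := exists_dual_forall_apply_eq_one hS
  have hflip : (LinearMap.BilinForm.flip B).Nondegenerate := LinearMap.flip_nondegenerate.2 hB
  refine ⟨(LinearMap.BilinForm.toDual _ hflip).symm f, fun s hs ↦ ?_⟩
  rw [← LinearMap.BilinForm.flip_apply, LinearMap.BilinForm.apply_toDual_symm_apply]
  exact hf s hs

theorem card_filter_forall_apply_eq_one {K V : Type*} [Field K] [Fintype K]
    [AddCommGroup V] [Module K V] [Fintype V] {B : LinearMap.BilinForm K V}
    (hB : B.Nondegenerate) {S : Finset V} (hS : LinearIndepOn K id (S : Set V))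
    [DecidablePred fun x ↦ ∀ s ∈ S, B s x = 1] :
    #{x | ∀ s ∈ S, B s x = 1} = Fintype.card K ^ (finrank K V - #S) := by
  obtain ⟨x₀, hx₀⟩ := exists_forall_apply_eq_one hB hS
  let W := B.orthogonal (Submodule.span K (S : Set V))
  have htranslate (x : V) : (∀ s ∈ S, B s x = 1) ↔ x - x₀ ∈ W := by
    rw [mem_orthogonal_span_iff]
    refine forall₂_congr fun s hs ↦ ?_
    rw [map_sub, hx₀ s hs, sub_eq_zero]
  calc #{x | ∀ s ∈ S, B s x = 1}
      = Nat.card W := by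
        rw [← Fintype.card_subtype, ← Nat.card_eq_fintype_card]
        exact Nat.card_congr ((Equiv.subRight x₀).subtypeEquiv htranslate)
    _ = Fintype.card K ^ (finrank K V - #S) := by
        rw [natCard_eq_pow_finrank (K := K), Nat.card_eq_fintype_card,
          LinearMap.BilinForm.finrank_orthogonal hB, finrank_span_finset_eq_card hS]

variable {V : Type*} [AddCommGroup V] [Module (ZMod 2) V] {B : LinearMap.BilinForm (ZMod 2) V}

/-- The graph on a symplectic `𝔽₂`-space joining two vectors when they are not orthogonal, that is,
when they pair to `1`; pentads are its 5-cliques. That the form is alternating makes the relation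
irreflexive and, as `-1 = 1`, symmetric. -/
def nonorthogonalGraph (hB : B.IsAlt) : SimpleGraph V where
  Adj u v := B u v = 1
  symm := ⟨fun u v huv ↦ by rw [← LinearMap.IsAlt.neg hB, huv, CharTwo.neg_eq]⟩
  loopless := ⟨fun u huu ↦ zero_ne_one ((hB u).symm.trans huu)⟩

namespace nonorthogonalGraph

instance decidableRelAdj (hB : B.IsAlt) : DecidableRel (nonorthogonalGraph hB).Adj :=
  fun u v ↦ inferInstanceAs (Decidable (B u v = 1))

variable {hB : B.IsAlt} {S : Finset V} {k : ℕ}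

theorem adj_iff {u v : V} : (nonorthogonalGraph hB).Adj u v ↔ B u v = 1 :=
  Iff.rfl

theorem apply_sum_smul_of_forall_adj {x : V} (hx : ∀ s ∈ S, (nonorthogonalGraph hB).Adj x s)
    (c : V → ZMod 2) : B x (∑ s ∈ S, c s • s) = ∑ s ∈ S, c s := by
  rw [map_sum]
  refine sum_congr rfl fun s hs ↦ ?_
  rw [map_smul, adj_iff.1 (hx s hs), smul_eq_mul, mul_one]

theorem apply_sum_smul_of_mem (hS : (nonorthogonalGraph hB).IsClique S) {t : V} (ht : t ∈ S)
    (c : V → ZMod 2) : B t (∑ s ∈ S, c s • s) = ∑ s ∈ S, c s - c t := by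
  classical
  have hadj : ∀ s ∈ S.erase t, (nonorthogonalGraph hB).Adj t s := fun s hs ↦
    hS ht (mem_of_mem_erase hs) (ne_of_mem_erase hs).symm
  rw [← add_sum_erase S (fun s ↦ c s • s) ht, map_add, map_smul, hB t, smul_zero, zero_add,
    apply_sum_smul_of_forall_adj hadj, sum_erase_eq_sub ht]

theorem eq_sum_of_sum_smul_eq_zero (hS : (nonorthogonalGraph hB).IsClique S) {c : V → ZMod 2}
    (hc : ∑ s ∈ S, c s • s = 0) {t : V} (ht : t ∈ S) : c t = ∑ s ∈ S, c s := by
  have h := apply_sum_smul_of_mem hS ht c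
  rw [hc, map_zero] at h
  exact (sub_eq_zero.1 h.symm).symm

theorem linearIndepOn_of_forall_adj (hS : (nonorthogonalGraph hB).IsClique S) {x : V}
    (hx : ∀ s ∈ S, (nonorthogonalGraph hB).Adj x s) :
    LinearIndepOn (ZMod 2) id (S : Set V) := by
  refine linearIndepOn_finset_iff.2 fun c hc t ht ↦ ?_
  simp only [id_eq] at hc
  rw [eq_sum_of_sum_smul_eq_zero hS hc ht, ← apply_sum_smul_of_forall_adj hx, hc, map_zero]

theorem adj_sum_of_even (hS : (nonorthogonalGraph hB).IsClique S) (heven : Even #S) {t : V}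
    (ht : t ∈ S) : (nonorthogonalGraph hB).Adj t (∑ s ∈ S, s) := by
  have h := apply_sum_smul_of_mem hS ht 1
  simp only [Pi.one_apply, one_smul, sum_const, nsmul_one, ZMod.natCast_eq_zero_iff_even.2 heven,
    zero_sub, ZModModule.neg_eq_self] at h
  exact h

theorem linearIndepOn_of_even (hS : (nonorthogonalGraph hB).IsClique S) (heven : Even #S) :
    LinearIndepOn (ZMod 2) id (S : Set V) :=
  linearIndepOn_of_forall_adj hS fun _ ht ↦ (adj_sum_of_even hS heven ht).symm

theorem linearIndepOn_iff_sum_ne_zero (hS : (nonorthogonalGraph hB).IsClique S)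
    (hne : S.Nonempty) : LinearIndepOn (ZMod 2) id (S : Set V) ↔ ∑ s ∈ S, s ≠ 0 := by
  rw [linearIndepOn_finset_iff]
  simp only [id_eq]
  constructor
  · intro hindep hsum
    obtain ⟨t, ht⟩ := hne
    exact one_ne_zero (hindep 1 (by simpa using hsum) t ht)
  · intro hsum c hc t ht
    have hconst : c t • ∑ s ∈ S, s = 0 := by
      rw [← hc, smul_sum]
      refine sum_congr rfl fun s hs ↦ ?_
      rw [eq_sum_of_sum_smul_eq_zero hS hc ht, eq_sum_of_sum_smul_eq_zero hS hc hs]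
    exact (smul_eq_zero.1 hconst).resolve_right hsum

theorem zero_notMem_of_one_lt_card (hS : (nonorthogonalGraph hB).IsClique S) (hcard : 1 < #S) :
    0 ∉ S := by
  intro h0
  obtain ⟨v, hv, hv0⟩ := exists_mem_ne hcard 0
  exact zero_ne_one ((LinearMap.map_zero₂ B v).symm.trans (hS h0 hv hv0.symm))

theorem card_filter_forall_adj [Fintype V] (hnd : B.Nondegenerate)
    (hS : LinearIndepOn (ZMod 2) id (S : Set V))
    [DecidablePred fun x ↦ ∀ s ∈ S, (nonorthogonalGraph hB).Adj s x] :
    #{x | ∀ s ∈ S, (nonorthogonalGraph hB).Adj s x} = 2 ^ (finrank (ZMod 2) V - #S) := by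
  simpa only [adj_iff, ZMod.card] using card_filter_forall_apply_eq_one hnd hS

variable [DecidableEq V]

theorem notMem_and_isNClique_insert_iff (hS : (nonorthogonalGraph hB).IsNClique k S) {x : V} :
    x ∉ S ∧ (nonorthogonalGraph hB).IsNClique (k + 1) (insert x S) ↔
      ∀ s ∈ S, (nonorthogonalGraph hB).Adj s x := by
  constructor
  · rintro ⟨hx, hins⟩ s hs
    exact hins.isClique (mem_insert_of_mem hs) (mem_insert_self x S) (ne_of_mem_of_not_mem hs hx)
  · intro hx
    exact ⟨fun hxS ↦ (hx x hxS).ne rfl, hS.insert fun s hs ↦ (hx s hs).symm⟩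

variable [Fintype V]

open scoped Classical in
/-- The linearly independent `k`-cliques, whose number of common neighbours depends only on `k`. -/
noncomputable def independentCliques (hB : B.IsAlt) (k : ℕ) : Finset (Finset V) :=
  {S ∈ (nonorthogonalGraph hB).cliqueFinset k | LinearIndepOn (ZMod 2) id (S : Set V)}

theorem mem_independentCliques : S ∈ independentCliques hB k ↔
    (nonorthogonalGraph hB).IsNClique k S ∧ LinearIndepOn (ZMod 2) id (S : Set V) := by
  classical
  rw [independentCliques, mem_filter, SimpleGraph.mem_cliqueFinset_iff]

theorem independentCliques_of_even (hk : Even k) :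
    independentCliques hB k = (nonorthogonalGraph hB).cliqueFinset k := by
  ext S
  rw [mem_independentCliques, SimpleGraph.mem_cliqueFinset_iff, and_iff_left_iff_imp]
  exact fun hS ↦ linearIndepOn_of_even hS.isClique (hS.card_eq ▸ hk)

theorem card_cliqueFinset_succ_mul (hnd : B.Nondegenerate) (k : ℕ) :
    #((nonorthogonalGraph hB).cliqueFinset (k + 1)) * (k + 1) =
      #(independentCliques hB k) * 2 ^ (finrank (ZMod 2) V - k) := by
  refine card_mul_succ_eq_card_mul_of_insert (fun T hT ↦ ?_) (fun T hT x hx ↦ ?_) fun S hS ↦ ?_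
  · exact (SimpleGraph.mem_cliqueFinset_iff.1 hT).card_eq
  · have hT := SimpleGraph.mem_cliqueFinset_iff.1 hT
    have herase := hT.erase_of_mem hx
    exact mem_independentCliques.2 ⟨herase, linearIndepOn_of_forall_adj herase.isClique fun s hs ↦
      hT.isClique hx (mem_of_mem_erase hs) (ne_of_mem_erase hs).symm⟩
  · obtain ⟨hclique, hindep⟩ := mem_independentCliques.1 hS
    simp only [SimpleGraph.mem_cliqueFinset_iff, notMem_and_isNClique_insert_iff hclique]
    rw [card_filter_forall_adj hnd hindep, hclique.card_eq]

theorem notMem_and_insert_mem_independentCliques_iff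
    (hS : (nonorthogonalGraph hB).IsNClique k S) {x : V} :
    x ∉ S ∧ insert x S ∈ independentCliques hB (k + 1) ↔
      x ≠ ∑ s ∈ S, s ∧ ∀ s ∈ S, (nonorthogonalGraph hB).Adj s x := by
  rw [mem_independentCliques, ← and_assoc, ← notMem_and_isNClique_insert_iff hS, and_comm]
  refine and_congr_left fun ⟨hx, hins⟩ ↦ ?_
  rw [linearIndepOn_iff_sum_ne_zero hins.isClique (insert_nonempty x S), sum_insert hx, ne_eq,
    add_eq_zero_iff_eq_neg, ZModModule.neg_eq_self]

theorem card_independentCliques_succ_mul_of_even (hnd : B.Nondegenerate) (hk : Even k) :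
    #(independentCliques hB (k + 1)) * (k + 1) =
      #((nonorthogonalGraph hB).cliqueFinset k) * (2 ^ (finrank (ZMod 2) V - k) - 1) := by
  refine card_mul_succ_eq_card_mul_of_insert (fun T hT ↦ ?_) (fun T hT x hx ↦ ?_) fun S hS ↦ ?_
  · exact (mem_independentCliques.1 hT).1.card_eq
  · exact SimpleGraph.mem_cliqueFinset_iff.2 ((mem_independentCliques.1 hT).1.erase_of_mem hx)
  · have hclique := SimpleGraph.mem_cliqueFinset_iff.1 hS
    have hsum : ∑ s ∈ S, s ∈ ({x | ∀ s ∈ S, (nonorthogonalGraph hB).Adj s x} : Finset V) :=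
      (mem_filter_univ _).2 fun s hs ↦
        adj_sum_of_even hclique.isClique (hclique.card_eq ▸ hk) hs
    have hindep := linearIndepOn_of_even hclique.isClique (hclique.card_eq ▸ hk)
    rw [← hclique.card_eq, ← card_filter_forall_adj (hB := hB) hnd hindep,
      ← card_erase_of_mem hsum, hclique.card_eq]
    congr 1
    ext x
    rw [mem_filter_univ, mem_erase, mem_filter_univ,
      notMem_and_insert_mem_independentCliques_iff hclique]

theorem card_cliqueFinset_two_mul (hnd : B.Nondegenerate) (m : ℕ) :
    #((nonorthogonalGraph hB).cliqueFinset (2 * m)) * (2 * m).factorial =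
      ∏ j ∈ range m, (2 ^ (finrank (ZMod 2) V - 2 * j) - 1) *
        2 ^ (finrank (ZMod 2) V - (2 * j + 1)) := by
  induction m with
  | zero => simp [SimpleGraph.cliqueFinset, filter_eq']
  | succ m ih =>
    have hodd := card_independentCliques_succ_mul_of_even (hB := hB) hnd (even_two_mul m)
    have heven := card_cliqueFinset_succ_mul (hB := hB) hnd (2 * m + 1)
    rw [prod_range_succ, ← ih, mul_add_one, Nat.factorial_succ, Nat.factorial_succ]
    linear_combination
      (2 * m + 1) * (2 * m).factorial * heven +
        (2 * m).factorial * 2 ^ (finrank (ZMod 2) V - (2 * m + 1)) * hodd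

end nonorthogonalGraph

-- If `2 * m` exceeds the (even) dimension, truncation produces a factor `2 ^ 0 - 1 = 0`.
theorem card_pentads_general [Finite V] (hB : B.IsAlt) (hnd : B.Nondegenerate) (m : ℕ) :
    Nat.card {S : Finset V // (nonorthogonalGraph hB).IsNClique (2 * m + 1) S} *
        (2 * m + 1).factorial =
      2 ^ (finrank (ZMod 2) V - 2 * m) * ∏ j ∈ range m,
        (2 ^ (finrank (ZMod 2) V - 2 * j) - 1) * 2 ^ (finrank (ZMod 2) V - (2 * j + 1)) := by
  classical
  have := Fintype.ofFinite V
  have hodd := nonorthogonalGraph.card_cliqueFinset_succ_mul (hB := hB) hnd (2 * m)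
  rw [nonorthogonalGraph.independentCliques_of_even (even_two_mul m)] at hodd
  rw [Nat.subtype_card _ fun _ ↦ SimpleGraph.mem_cliqueFinset_iff, Nat.factorial_succ,
    ← nonorthogonalGraph.card_cliqueFinset_two_mul (hB := hB) hnd m, ← mul_assoc, hodd]
  ring

end

/-- The form `symForm` bundled as a bilinear form, to which the general count applies. -/
def symBilinForm : LinearMap.BilinForm (ZMod 2) Uspace :=
  LinearMap.mk₂ (ZMod 2) symForm
    (fun x y z ↦ by simp only [symForm, Pi.add_apply]; ring)
    (fun c x y ↦ by simp only [symForm, Pi.smul_apply, smul_eq_mul]; ring)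
    (fun x y z ↦ by simp only [symForm, Pi.add_apply]; ring)
    (fun c x y ↦ by simp only [symForm, Pi.smul_apply, smul_eq_mul]; ring)

theorem isAlt_symBilinForm : symBilinForm.IsAlt := by
  intro x
  change symForm x x = 0
  rw [symForm]
  linear_combination CharTwo.add_self_eq_zero (x 0 * x 2 + x 1 * x 3)

theorem nondegenerate_symBilinForm : symBilinForm.Nondegenerate := by
  refine (LinearMap.IsRefl.nondegenerate_iff_separatingLeft isAlt_symBilinForm.isRefl).2
    fun x hx ↦ ?_
  have hcoord (i : Fin 4) : symForm x (Pi.single i 1) = 0 := hx _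
  have h0 : x 0 = 0 := by simpa [symForm] using hcoord 2
  have h1 : x 1 = 0 := by simpa [symForm] using hcoord 3
  have h2 : x 2 = 0 := by simpa [symForm] using hcoord 0
  have h3 : x 3 = 0 := by simpa [symForm] using hcoord 1
  ext i
  fin_cases i <;> assumption

theorem isPentad_iff_isNClique (S : Finset Uspace) :
    IsPentad S ↔ (nonorthogonalGraph isAlt_symBilinForm).IsNClique 5 S := by
  constructor
  · rintro ⟨-, hcard, hpair⟩
    exact ⟨fun u hu v hv huv ↦ hpair u hu v hv huv, hcard⟩
  · rintro ⟨hclique, hcard⟩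
    exact ⟨nonorthogonalGraph.zero_notMem_of_one_lt_card hclique (by omega), hcard,
      fun u hu v hv huv ↦ hclique hu hv huv⟩

/-- There are exactly six pentads in `U`. -/
theorem card_pentads :
    Nat.card {S : Finset Uspace // IsPentad S} = 6 := by
  simp_rw [isPentad_iff_isNClique]
  refine Nat.eq_of_mul_eq_mul_right (Nat.factorial_pos 5)
    ((card_pentads_general isAlt_symBilinForm nondegenerate_symBilinForm 2).trans ?_)
  norm_num [Finset.prod_range_succ, Nat.factorial]
end

section
/- Every g ∈ Sp(U) maps each pentad onto a pentad, and the resulting group homomorphism from Sp(U) to the group of permutations of the (six-element) set of pentads is bijective, i.e. it is a group isomorphism of Sp(U) with the symmetric group on the six pentads. -/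
/-- The symplectic group `Sp(U) = Sp(4,𝔽₂)`: linear automorphisms of `U`
preserving the symplectic form. -/
def Sp : Subgroup (Uspace ≃ₗ[ZMod 2] Uspace) where
  carrier := {g | ∀ x y : Uspace, symForm (g x) (g y) = symForm x y}
  one_mem' := fun _ _ => rfl
  mul_mem' := by
    intro a b ha hb x y
    exact (ha (b x) (b y)).trans (hb x y)
  inv_mem' := by
    intro a ha x y
    have h := ha (a⁻¹ x) (a⁻¹ y)
    rw [show a (a⁻¹ x) = x from a.apply_symm_apply x,
      show a (a⁻¹ y) = y from a.apply_symm_apply y] at h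
    exact h.symm

open LinearMap (BilinForm)
open Module (finrank)
open scoped Pointwise

section Isometry

variable {R V : Type*} [CommRing R] [AddCommGroup V] [Module R V]

/-- The group of linear automorphisms of `V` preserving the bilinear form `B`. For `B = symForm` it
unfolds to `Sp`. -/
def isometryGroup (B : BilinForm R V) : Subgroup (V ≃ₗ[R] V) where
  carrier := {g | ∀ x y, B (g x) (g y) = B x y}
  one_mem' _ _ := rfl
  mul_mem' {g h} hg hh x y := (hg (h x) (h y)).trans (hh x y)
  inv_mem' {g} hg x y := by
    change B (g.symm x) (g.symm y) = B x y
    rw [← hg, LinearEquiv.apply_symm_apply, LinearEquiv.apply_symm_apply]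

variable {B : BilinForm R V}

theorem isometryGroup.apply_smul_smul (g : isometryGroup B) (x y : V) : B (g • x) (g • y) = B x y :=
  g.2 x y

/-- The symplectic transvection `x ↦ x + ⟨v, x⟩ v` along `v`, as an isometry of the alternating
form `B`. -/
def symplecticTransvection (hB : B.IsAlt) (v : V) : isometryGroup B :=
  ⟨LinearEquiv.transvection (hB v), fun x y => by
    simp only [LinearEquiv.transvection.apply, map_add, map_smul, LinearMap.add_apply,
      LinearMap.smul_apply, smul_eq_mul, hB v, ← hB.neg_eq v x]
    ring⟩

theorem symplecticTransvection_smul (hB : B.IsAlt) (v x : V) :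
    symplecticTransvection hB v • x = x + B v x • v :=
  rfl

theorem symplecticTransvection_smul_of_apply_eq_zero (hB : B.IsAlt) {v x : V} (h : B v x = 0) :
    symplecticTransvection hB v • x = x := by
  rw [symplecticTransvection_smul, h, zero_smul, add_zero]

theorem symplecticTransvection_smul_of_apply_eq_one (hB : B.IsAlt) {v x : V} (h : B v x = 1) :
    symplecticTransvection hB v • x = x + v := by
  rw [symplecticTransvection_smul, h, one_smul]

end Isometry

section Pentad

theorem eq_one_of_ne_zero {a : ZMod 2} (ha : a ≠ 0) : a = 1 :=
  Fin.eq_one_of_ne_zero a ha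

variable {V : Type*} [AddCommGroup V] [Module (ZMod 2) V] {B : BilinForm (ZMod 2) V}
  {R S T : Finset V} {e u v w x y : V}

theorem apply_comm_of_isAlt (hB : B.IsAlt) (x y : V) : B x y = B y x := by
  rw [← hB.neg_eq x y, CharTwo.neg_eq]

theorem symplecticTransvection_add_smul_left (hB : B.IsAlt) (h : B v u = 1) :
    symplecticTransvection hB (u + v) • u = v := by
  have huv : B (u + v) u = 1 := by rw [map_add, LinearMap.add_apply, hB u, zero_add, h]
  rw [symplecticTransvection_smul_of_apply_eq_one hB huv, ← add_assoc, ZModModule.add_self,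
    zero_add]

/-- The notion of pentad for an arbitrary bilinear form `B` over `𝔽₂`, phrased so that for
`B = symForm` it unfolds to `IsPentad`. -/
def IsPentadFor (B : BilinForm (ZMod 2) V) (S : Finset V) : Prop :=
  0 ∉ S ∧ S.card = 5 ∧ ∀ u ∈ S, ∀ v ∈ S, u ≠ v → B u v = 1

theorem isPentadFor_image [DecidableEq V] (hB : B.IsAlt) {p : Fin 5 → V}
    (hp : ∀ i j, i < j → B (p i) (p j) = 1) : IsPentadFor B (Finset.univ.image p) := by
  have hp' (i j) (hij : i ≠ j) : B (p i) (p j) = 1 :=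
    hij.lt_or_gt.elim (hp i j) fun hji => (apply_comm_of_isAlt hB _ _).trans (hp j i hji)
  have hinj : Function.Injective p := fun i j h => by
    by_contra hij
    simpa only [h, hB (p j), zero_ne_one] using hp' i j hij
  refine ⟨?_, by rw [Finset.card_image_of_injective _ hinj, Finset.card_fin], ?_⟩
  · simp only [Finset.mem_image, Finset.mem_univ, true_and, not_exists]
    intro i hi
    obtain ⟨j, hij⟩ := exists_ne i
    simpa only [hi, map_zero, zero_ne_one] using hp' j i hij
  · simp only [Finset.mem_image, Finset.mem_univ, true_and]
    rintro _ ⟨i, rfl⟩ _ ⟨j, rfl⟩ hij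
    exact hp' i j fun h => hij (congrArg p h)

theorem exists_apply_eq_one (hB : B.SeparatingLeft) (hx : x ≠ 0) : ∃ y, B x y = 1 := by
  by_contra! h
  exact hx (hB x fun y => by_contra fun hy => h y (eq_one_of_ne_zero hy))

theorem exists_two_hyperbolic_pairs (hB : B.IsAlt) (hsep : B.SeparatingLeft)
    (hdim : 2 < finrank (ZMod 2) V) :
    ∃ a b c d, B a b = 1 ∧ B c d = 1 ∧ B a c = 0 ∧ B a d = 0 ∧ B b c = 0 ∧ B b d = 0 := by
  have : FiniteDimensional (ZMod 2) V := Module.finite_of_finrank_pos (by lia)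
  have : Nontrivial V := Module.nontrivial_of_finrank_pos (R := ZMod 2) (by lia)
  obtain ⟨a, ha⟩ := exists_ne (0 : V)
  obtain ⟨b, hab⟩ := exists_apply_eq_one hsep ha
  obtain ⟨c, hc, hc0⟩ := Submodule.exists_mem_ne_zero_of_ne_bot
    (LinearMap.ker_ne_bot_of_finrank_lt (f := (B a).prod (B b))
      (by rwa [Module.finrank_prod, Module.finrank_self]))
  obtain ⟨hac, hbc⟩ : B a c = 0 ∧ B b c = 0 := by simpa using hc
  obtain ⟨d, hcd⟩ := exists_apply_eq_one hsep hc0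
  have hba : B b a = 1 := (apply_comm_of_isAlt hB b a).trans hab
  have hca : B c a = 0 := (apply_comm_of_isAlt hB c a).trans hac
  have hcb : B c b = 0 := (apply_comm_of_isAlt hB c b).trans hbc
  -- Project `d` to the orthogonal complement of `a` and `b`.
  refine ⟨a, b, c, d + B b d • a + B a d • b, hab, ?_, hac, ?_, hbc, ?_⟩ <;>
    simp [hB a, hB b, *, CharTwo.add_self_eq_zero]

theorem exists_isPentadFor (hB : B.IsAlt) (hsep : B.SeparatingLeft)
    (hdim : 2 < finrank (ZMod 2) V) : ∃ S, IsPentadFor B S := by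
  classical
  obtain ⟨a, b, c, d, hab, hcd, hac, had, hbc, hbd⟩ := exists_two_hyperbolic_pairs hB hsep hdim
  have hba : B b a = 1 := (apply_comm_of_isAlt hB b a).trans hab
  have hdc : B d c = 1 := (apply_comm_of_isAlt hB d c).trans hcd
  have hca : B c a = 0 := (apply_comm_of_isAlt hB c a).trans hac
  have hcb : B c b = 0 := (apply_comm_of_isAlt hB c b).trans hbc
  have hda : B d a = 0 := (apply_comm_of_isAlt hB d a).trans had
  have hdb : B d b = 0 := (apply_comm_of_isAlt hB d b).trans hbd
  refine ⟨_, isPentadFor_image hB (p := ![a, b, a + b + c, a + b + d, a + b + c + d]) ?_⟩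
  simp [Fin.forall_fin_succ, hB a, hB b, hB c, hB d, *, CharTwo.add_self_eq_zero]

namespace IsPentadFor

theorem apply_eq_one (hS : IsPentadFor B S) (hu : u ∈ S) (hv : v ∈ S) (huv : u ≠ v) :
    B u v = 1 :=
  hS.2.2 u hu v hv huv

theorem nonempty (hS : IsPentadFor B S) : S.Nonempty :=
  Finset.card_pos.1 (by rw [hS.2.1]; norm_num)

theorem ne_zero_of_mem (hS : IsPentadFor B S) (hv : v ∈ S) : v ≠ 0 :=
  ne_of_mem_of_not_mem hv hS.1

theorem eq_of_subset (hR : IsPentadFor B R) (hS : IsPentadFor B S) (h : R ⊆ S) : R = S :=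
  Finset.eq_of_subset_of_card_le h (by rw [hR.2.1, hS.2.1])

theorem add_notMem (hS : IsPentadFor B S) (hu : u ∈ S) (hv : v ∈ S) : u + v ∉ S := by
  classical
  intro huvS
  obtain ⟨w, hw, hw'⟩ : ∃ w ∈ S, w ∉ ({u, v, u + v} : Finset V) :=
    Finset.exists_mem_notMem_of_card_lt_card
      (Finset.card_le_three.trans_lt (by rw [hS.2.1]; norm_num))
  simp only [Finset.mem_insert, Finset.mem_singleton, not_or] at hw'
  obtain ⟨hwu, hwv, hwuv⟩ := hw'
  have h : B w u + B w v = 1 := by rw [← map_add, hS.apply_eq_one hw huvS hwuv]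
  rw [hS.apply_eq_one hw hu hwu, hS.apply_eq_one hw hv hwv] at h
  exact absurd h (by decide)

theorem apply_add_right [DecidableEq V] (hB : B.IsAlt) (hS : IsPentadFor B S) (he : e ∈ S)
    (hu : u ∈ S) (hue : u ≠ e) (hw : w ∈ S) : B u (e + w) = if u = w then 1 else 0 := by
  rw [map_add, hS.apply_eq_one hu he hue]
  split_ifs with huw
  · rw [← huw, hB u, add_zero]
  · rw [hS.apply_eq_one hu hw huw, CharTwo.add_self_eq_zero]

-- The four vectors `e + u` with `u ∈ S \ {e}` form a dual family to `S \ {e}`, hence a basis.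
theorem eq_of_forall_apply_add_eq (hB : B.IsAlt) (hdim : finrank (ZMod 2) V = 4)
    (hS : IsPentadFor B S) (he : e ∈ S) (h : ∀ u ∈ S, B x (e + u) = B y (e + u)) : x = y := by
  classical
  have : FiniteDimensional (ZMod 2) V := Module.finite_of_finrank_pos (by lia)
  let f : V →ₗ[ZMod 2] (S.erase e → ZMod 2) := LinearMap.pi fun u => B.flip (e + u)
  have hsurj : Function.Surjective f := fun c => ⟨∑ u, c u • u.1, by
    ext w
    have hdual (u : S.erase e) : B u.1 (e + w.1) = if u = w then 1 else 0 := by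
      obtain ⟨hue, hu⟩ := Finset.mem_erase.1 u.2
      simp only [hS.apply_add_right hB he hu hue (Finset.mem_of_mem_erase w.2), Subtype.ext_iff]
    simp [f, hdual, -map_add]⟩
  have hrank : finrank (ZMod 2) V = finrank (ZMod 2) (S.erase e → ZMod 2) := by
    rw [hdim, Module.finrank_fintype_fun_eq_card, Fintype.card_coe, Finset.card_erase_of_mem he,
      hS.2.1]
  exact (LinearMap.injective_iff_surjective_of_finrank_eq_finrank hrank).2 hsurj
    (funext fun u => h u (Finset.mem_of_mem_erase u.2))

theorem sum_apply_smul_eq (hB : B.IsAlt) (hdim : finrank (ZMod 2) V = 4)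
    (hS : IsPentadFor B S) (he : e ∈ S) (x : V) : ∑ u ∈ S, B x (e + u) • u = x := by
  classical
  refine hS.eq_of_forall_apply_add_eq hB hdim he fun w hw => ?_
  have hterm : ∀ u ∈ S, B x (e + u) * B u (e + w) = if u = w then B x (e + u) else 0 := by
    intro u hu
    by_cases hue : u = e
    · simp [hue, ZModModule.add_self]
    · rw [hS.apply_add_right hB he hu hue hw, mul_ite, mul_one, mul_zero]
  simp only [map_sum, map_smul, LinearMap.sum_apply, LinearMap.smul_apply, smul_eq_mul]
  rw [Finset.sum_congr rfl hterm, Finset.sum_ite_eq' S w, if_pos hw]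

theorem exists_card_filter_apply_ne_le_two (hS : IsPentadFor B S) (x : V) :
    ∃ e ∈ S, (S.filter fun u => B x u ≠ B x e).card ≤ 2 := by
  have hsplit := S.card_filter_add_card_filter_not (fun u => B x u = 1)
  rw [hS.2.1] at hsplit
  by_cases hle : (S.filter fun u => B x u = 1).card ≤ 2
  · obtain ⟨e, he⟩ := Finset.card_pos.1 (by lia : 0 < (S.filter fun u => ¬B x u = 1).card)
    obtain ⟨heS, hxe⟩ := Finset.mem_filter.1 he
    refine ⟨e, heS, (Finset.card_le_card ?_).trans hle⟩
    refine Finset.monotone_filter_right S fun u _ hu => eq_one_of_ne_zero ?_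
    rwa [not_imp_comm.1 eq_one_of_ne_zero hxe] at hu
  · obtain ⟨e, he⟩ := Finset.card_pos.1 (by lia : 0 < (S.filter fun u => B x u = 1).card)
    obtain ⟨heS, hxe⟩ := Finset.mem_filter.1 he
    exact ⟨e, heS, by simp only [hxe, ne_eq]; lia⟩

theorem eq_zero_or_mem_or_exists_add_eq (hB : B.IsAlt) (hdim : finrank (ZMod 2) V = 4)
    (hS : IsPentadFor B S) (x : V) :
    x = 0 ∨ x ∈ S ∨ ∃ u ∈ S, ∃ v ∈ S, u ≠ v ∧ u + v = x := by
  classical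
  obtain ⟨e, he, hcard⟩ := hS.exists_card_filter_apply_ne_le_two x
  set A := S.filter fun u => B x u ≠ B x e
  have hAS : A ⊆ S := Finset.filter_subset _ _
  have hx : ∑ u ∈ A, u = x := by
    rw [← hS.sum_apply_smul_eq hB hdim he x, Finset.sum_filter]
    refine Finset.sum_congr rfl fun u _ => ?_
    split_ifs with hu
    · have hadd : B x (e + u) = 1 := by
        rw [map_add]
        exact eq_one_of_ne_zero fun h => hu (CharTwo.add_eq_zero.1 h).symm
      rw [hadd, one_smul]
    · rw [map_add, not_not.1 hu, CharTwo.add_self_eq_zero, zero_smul]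
  interval_cases h : A.card
  · left
    rw [← hx, Finset.card_eq_zero.1 h, Finset.sum_empty]
  · right; left
    obtain ⟨u, hu⟩ := Finset.card_eq_one.1 h
    rw [← hx, hu, Finset.sum_singleton]
    exact hAS (by rw [hu]; exact Finset.mem_singleton_self u)
  · right; right
    obtain ⟨u, v, huv, hAuv⟩ := Finset.card_eq_two.1 h
    rw [hAuv, Finset.insert_subset_iff, Finset.singleton_subset_iff] at hAS
    exact ⟨u, hAS.1, v, hAS.2, huv, by rw [← hx, hAuv, Finset.sum_pair huv]⟩

section Transvection

variable [DecidableEq V]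

theorem smul (hS : IsPentadFor B S) (g : isometryGroup B) : IsPentadFor B (g • S) := by
  refine ⟨fun h0 => ?_, by rw [Finset.card_smul_finset, hS.2.1], ?_⟩
  · obtain ⟨u, hu, hgu⟩ := Finset.mem_smul_finset.1 h0
    exact hS.ne_zero_of_mem hu ((smul_eq_zero_iff_eq g).1 hgu)
  · simp only [Finset.mem_smul_finset]
    rintro _ ⟨u, hu, rfl⟩ _ ⟨v, hv, rfl⟩ huv
    rw [isometryGroup.apply_smul_smul, hS.apply_eq_one hu hv fun h => huv (congrArg _ h)]

theorem mem_transvection_smul (hB : B.IsAlt) (hv : v ∈ S) :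
    v ∈ symplecticTransvection hB v • S :=
  Finset.mem_smul_finset.2 ⟨v, hv, symplecticTransvection_smul_of_apply_eq_zero hB (hB v)⟩

theorem add_mem_transvection_smul (hB : B.IsAlt) (hS : IsPentadFor B S) (hv : v ∈ S) (hu : u ∈ S)
    (huv : u ≠ v) : u + v ∈ symplecticTransvection hB v • S :=
  Finset.mem_smul_finset.2 ⟨u, hu,
    symplecticTransvection_smul_of_apply_eq_one hB (hS.apply_eq_one hv hu huv.symm)⟩

theorem eq_of_mem_of_mem_transvection_smul (hB : B.IsAlt) (hS : IsPentadFor B S) (hv : v ∈ S)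
    (hx : x ∈ S) (hx' : x ∈ symplecticTransvection hB v • S) : x = v := by
  obtain ⟨u, hu, rfl⟩ := Finset.mem_smul_finset.1 hx'
  by_cases huv : u = v
  · rw [huv, symplecticTransvection_smul_of_apply_eq_zero hB (hB v)]
  · rw [symplecticTransvection_smul_of_apply_eq_one hB (hS.apply_eq_one hv hu (Ne.symm huv))] at hx
    exact absurd hx (hS.add_notMem hu hv)

theorem transvection_smul_eq_self (hB : B.IsAlt) (hdim : finrank (ZMod 2) V = 4)
    (hS : IsPentadFor B S) (hv0 : v ≠ 0) (hv : v ∉ S) : symplecticTransvection hB v • S = S := by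
  obtain ⟨a, ha, b, hb, hab, rfl⟩ :=
    ((hS.eq_zero_or_mem_or_exists_add_eq hB hdim v).resolve_left hv0).resolve_left hv
  refine (hS.smul _).eq_of_subset hS fun y hy => ?_
  obtain ⟨u, hu, rfl⟩ := Finset.mem_smul_finset.1 hy
  by_cases hua : u = a
  · rwa [hua, symplecticTransvection_add_smul_left hB (hS.apply_eq_one hb ha hab.symm)]
  by_cases hub : u = b
  · rwa [hub, add_comm, symplecticTransvection_add_smul_left hB (hS.apply_eq_one ha hb hab)]
  have hu_orth : B (a + b) u = 0 := by
    rw [map_add, LinearMap.add_apply, hS.apply_eq_one ha hu (Ne.symm hua),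
      hS.apply_eq_one hb hu (Ne.symm hub), CharTwo.add_self_eq_zero]
  rwa [symplecticTransvection_smul_of_apply_eq_zero hB hu_orth]

theorem subset_union_transvection_smul (hB : B.IsAlt) (hdim : finrank (ZMod 2) V = 4)
    (hR : IsPentadFor B R) (hS : IsPentadFor B S) (hvR : v ∈ R) (hvS : v ∈ S) :
    R ⊆ S ∪ symplecticTransvection hB v • S := by
  intro x hx
  rw [Finset.mem_union]
  by_cases hxv : x = v
  · exact Or.inl (hxv ▸ hvS)
  obtain rfl | hxS | ⟨a, ha, b, hb, hab, rfl⟩ := hS.eq_zero_or_mem_or_exists_add_eq hB hdim x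
  · exact absurd hx hR.1
  · exact Or.inl hxS
  by_cases hbv : b = v
  · exact Or.inr (hbv ▸ hS.add_mem_transvection_smul hB hb ha hab)
  by_cases hav : a = v
  · rw [add_comm]
    exact Or.inr (hav ▸ hS.add_mem_transvection_smul hB ha hb hab.symm)
  have h : B v a + B v b = 1 := by rw [← map_add, hR.apply_eq_one hvR hx (Ne.symm hxv)]
  rw [hS.apply_eq_one hvS ha (Ne.symm hav), hS.apply_eq_one hvS hb (Ne.symm hbv)] at h
  exact absurd h (by decide)

theorem eq_or_eq_transvection_smul (hB : B.IsAlt) (hdim : finrank (ZMod 2) V = 4)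
    (hR : IsPentadFor B R) (hS : IsPentadFor B S) (hvR : v ∈ R) (hvS : v ∈ S) :
    R = S ∨ R = symplecticTransvection hB v • S := by
  have hcover {x} (hx : x ∈ R) : x ∈ S ∨ x ∈ symplecticTransvection hB v • S :=
    Finset.mem_union.1 (hR.subset_union_transvection_smul hB hdim hS hvR hvS hx)
  by_contra! hne
  obtain ⟨x, hxR, hxt⟩ := Finset.not_subset.1 fun h => hne.2 (hR.eq_of_subset (hS.smul _) h)
  obtain ⟨y, hyR, hyS⟩ := Finset.not_subset.1 fun h => hne.1 (hR.eq_of_subset hS h)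
  have hxS := (hcover hxR).resolve_right hxt
  obtain ⟨u, hu, rfl⟩ := Finset.mem_smul_finset.1 ((hcover hyR).resolve_left hyS)
  have huv : u ≠ v := fun h => hyS <| by
    rwa [h, symplecticTransvection_smul_of_apply_eq_zero hB (hB v)]
  rw [symplecticTransvection_smul_of_apply_eq_one hB (hS.apply_eq_one hvS hu huv.symm)] at hyR hyS
  have hxv : x ≠ v := fun h => hxt <| by
    rw [h]
    exact mem_transvection_smul hB hvS
  have hxu : x = u := by
    by_contra hxu
    have h := hR.apply_eq_one hxR hyR (ne_of_mem_of_not_mem hxS hyS)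
    rw [map_add, hS.apply_eq_one hxS hu hxu, hS.apply_eq_one hxS hvS hxv] at h
    exact absurd h (by decide)
  exact hR.add_notMem (hxu ▸ hxR) hvR hyR

theorem transvection_smul_eq (hB : B.IsAlt) (hdim : finrank (ZMod 2) V = 4)
    (hS : IsPentadFor B S) (hT : IsPentadFor B T) (hST : S ≠ T) (hvS : v ∈ S) (hvT : v ∈ T) :
    symplecticTransvection hB v • S = T :=
  ((hT.eq_or_eq_transvection_smul hB hdim hS hvT hvS).resolve_left hST.symm).symm

end Transvection

theorem eq_or_eq_of_mem (hB : B.IsAlt) (hdim : finrank (ZMod 2) V = 4)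
    (hR : IsPentadFor B R) (hS : IsPentadFor B S) (hT : IsPentadFor B T) (hST : S ≠ T)
    (hvR : v ∈ R) (hvS : v ∈ S) (hvT : v ∈ T) : R = S ∨ R = T := by
  classical
  rw [← hS.transvection_smul_eq hB hdim hT hST hvS hvT]
  exact hR.eq_or_eq_transvection_smul hB hdim hS hvR hvS

theorem exists_mem_mem (hB : B.IsAlt) (hdim : finrank (ZMod 2) V = 4)
    (hR : IsPentadFor B R) (hS : IsPentadFor B S) : ∃ v, v ∈ R ∧ v ∈ S := by
  classical
  obtain ⟨x, hxR⟩ := hR.nonempty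
  obtain rfl | hxS | ⟨a, ha, b, hb, hab, rfl⟩ := hS.eq_zero_or_mem_or_exists_add_eq hB hdim x
  · exact absurd hxR hR.1
  · exact ⟨x, hxR, hxS⟩
  have hne : symplecticTransvection hB a • S ≠ symplecticTransvection hB b • S := fun h =>
    hab (hS.eq_of_mem_of_mem_transvection_smul hB hb ha (h ▸ mem_transvection_smul hB ha))
  have habb := hS.add_mem_transvection_smul hB hb ha hab
  have haba := hS.add_mem_transvection_smul hB ha hb hab.symm
  rw [add_comm] at haba
  obtain rfl | rfl := hR.eq_or_eq_of_mem hB hdim (hS.smul _) (hS.smul _) hne hxR haba habb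
  exacts [⟨a, mem_transvection_smul hB ha, ha⟩, ⟨b, mem_transvection_smul hB hb, hb⟩]

end IsPentadFor

/-- The set of pentads of `B`, as an invariant subset of the pointwise action of the isometry group
of `B` on finite subsets of `V`; the action on pentads is thus `S ↦ g • S = S.image g`. -/
def pentads [DecidableEq V] (B : BilinForm (ZMod 2) V) :
    SubMulAction (isometryGroup B) (Finset V) where
  carrier := {S | IsPentadFor B S}
  smul_mem' g _ hS := hS.smul g

variable [DecidableEq V]

theorem toPermHom_pentads_injective (hB : B.IsAlt) (hsep : B.SeparatingLeft)
    (hdim : finrank (ZMod 2) V = 4) :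
    Function.Injective (MulAction.toPermHom (isometryGroup B) (pentads B)) := by
  refine (injective_iff_map_eq_one _).2 fun g hg => ?_
  have hfix {R} (hR : IsPentadFor B R) : g • R = R :=
    congrArg Subtype.val (Equiv.congr_fun hg ⟨R, hR⟩)
  obtain ⟨S, hS⟩ := exists_isPentadFor hB hsep (by lia)
  -- `g` stabilises both `S` and `t_u S`, whose only common vector is `u`.
  have hgu (u : V) (hu : u ∈ S) : g • u = u := by
    refine hS.eq_of_mem_of_mem_transvection_smul hB hu ?_ ?_
    · exact hfix hS ▸ Finset.smul_mem_smul_finset hu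
    · exact hfix (hS.smul (symplecticTransvection hB u)) ▸
        Finset.smul_mem_smul_finset (IsPentadFor.mem_transvection_smul hB hu)
  obtain ⟨e, he⟩ := hS.nonempty
  refine Subtype.ext (LinearEquiv.ext fun x => ?_)
  rw [← hS.sum_apply_smul_eq hB hdim he x, map_sum]
  exact Finset.sum_congr rfl fun u hu =>
    (map_smul _ _ _).trans (congrArg (B x (e + u) • ·) (hgu u hu))

theorem toPermHom_transvection (hB : B.IsAlt) (hdim : finrank (ZMod 2) V = 4)
    {S T : pentads B} (hST : S ≠ T) (hvS : v ∈ S.1) (hvT : v ∈ T.1) :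
    MulAction.toPermHom _ (pentads B) (symplecticTransvection hB v) = Equiv.swap S T := by
  have hT : symplecticTransvection hB v • S = T :=
    Subtype.ext (S.2.transvection_smul_eq hB hdim T.2 (Subtype.coe_ne_coe.2 hST) hvS hvT)
  have hS : symplecticTransvection hB v • T = S :=
    Subtype.ext (T.2.transvection_smul_eq hB hdim S.2 (Subtype.coe_ne_coe.2 hST.symm) hvT hvS)
  ext1 R
  rw [MulAction.toPermHom_apply, MulAction.toPerm_apply]
  by_cases hRS : R = S
  · rw [hRS, hT, Equiv.swap_apply_left]
  by_cases hRT : R = T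
  · rw [hRT, hS, Equiv.swap_apply_right]
  rw [Equiv.swap_apply_of_ne_of_ne hRS hRT]
  refine Subtype.ext (R.2.transvection_smul_eq_self hB hdim (S.2.ne_zero_of_mem hvS) fun hvR => ?_)
  exact (R.2.eq_or_eq_of_mem hB hdim S.2 T.2 (Subtype.coe_ne_coe.2 hST) hvR hvS hvT).elim
    (fun h => hRS (Subtype.ext h)) fun h => hRT (Subtype.ext h)

theorem toPermHom_pentads_surjective (hB : B.IsAlt) (hdim : finrank (ZMod 2) V = 4) :
    Function.Surjective (MulAction.toPermHom (isometryGroup B) (pentads B)) := by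
  have : FiniteDimensional (ZMod 2) V := Module.finite_of_finrank_pos (by lia)
  have : Finite V := Module.finite_of_finite (ZMod 2)
  rw [← MonoidHom.range_eq_top, eq_top_iff, ← Equiv.Perm.closure_isSwap, Subgroup.closure_le]
  rintro _ ⟨S, T, hST, rfl⟩
  obtain ⟨v, hvS, hvT⟩ := S.2.exists_mem_mem hB hdim T.2
  exact ⟨_, toPermHom_transvection hB hdim hST hvS hvT⟩

theorem sp_iso_perm_pentads_general (hB : B.IsAlt) (hsep : B.SeparatingLeft)
    (hdim : finrank (ZMod 2) V = 4) :
    Function.Bijective (MulAction.toPermHom (isometryGroup B) (pentads B)) :=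
  ⟨toPermHom_pentads_injective hB hsep hdim, toPermHom_pentads_surjective hB hdim⟩

end Pentad

/-- The form `symForm` as a bundled bilinear form. -/
def symBilin : BilinForm (ZMod 2) Uspace :=
  LinearMap.mk₂ (ZMod 2) symForm
    (fun x y z => by simp only [symForm, Pi.add_apply]; ring)
    (fun c x y => by simp only [symForm, Pi.smul_apply, smul_eq_mul]; ring)
    (fun x y z => by simp only [symForm, Pi.add_apply]; ring)
    (fun c x y => by simp only [symForm, Pi.smul_apply, smul_eq_mul]; ring)

theorem symBilin_isAlt : symBilin.IsAlt := fun x =>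
  calc symForm x x = 2 * (x 0 * x 2 + x 1 * x 3) := by simp only [symForm]; ring
    _ = 0 := by simp only [CharTwo.two_eq_zero (R := ZMod 2), zero_mul]

theorem symBilin_separatingLeft : symBilin.SeparatingLeft := by
  intro x hx
  ext i
  fin_cases i
  · simpa [symBilin, symForm] using hx (Pi.single 2 1)
  · simpa [symBilin, symForm] using hx (Pi.single 3 1)
  · simpa [symBilin, symForm] using hx (Pi.single 0 1)
  · simpa [symBilin, symForm] using hx (Pi.single 1 1)

/-- Every element of `Sp(U)` maps pentads onto pentads, and the resulting
homomorphism from `Sp(U)` to the permutation group of the set of pentads is a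
group isomorphism. -/
theorem sp_iso_perm_pentads :
    (∀ g : Sp, ∀ S : Finset Uspace, IsPentad S →
        IsPentad (S.image (fun x => (g : Uspace ≃ₗ[ZMod 2] Uspace) x))) ∧
    ∃ φ : Sp →* Equiv.Perm {S : Finset Uspace // IsPentad S},
      (∀ (g : Sp) (S : {S : Finset Uspace // IsPentad S}),
          ((φ g S : {S : Finset Uspace // IsPentad S}) : Finset Uspace) =
            S.1.image (fun x => (g : Uspace ≃ₗ[ZMod 2] Uspace) x)) ∧
      Function.Bijective φ := by
  exact ⟨fun g S hS => IsPentadFor.smul (B := symBilin) hS g,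
    MulAction.toPermHom (isometryGroup symBilin) (pentads symBilin), fun _ _ => rfl,
    sp_iso_perm_pentads_general symBilin_isAlt symBilin_separatingLeft (Module.finrank_fin_fun _)⟩
end
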